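/- For every integer k ≥ 3 there exist constants c_k, c'_k > 0 such that for every sufficiently large n there is a k-uniform hypergraph H on n vertices with maximum degree at most c_k·n (every vertex lies in at most c_k·n edges) whose 4-color Ramsey number satisfies r_k(H; 4) ≥ tw_k(c'_k·n). -/

import Mathlib

open Finset

/-- The tower function: `tw 1 x = x` and `tw k x = 2 ^ tw (k-1) x` for `k ≥ 2`. -/
noncomputable def tw : ℕ → ℝ → ℝ
  | 0, x => x
  | 1, x => x
  | (k + 2), x => 2 ^ tw (k + 1) x

/-- The `q`-color Ramsey number of a hypergraph given by its edge set `E` on a finite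
vertex type `V`. -/
noncomputable def hypRamsey (q : ℕ) {V : Type} [Fintype V] [DecidableEq V]
    (E : Finset (Finset V)) : ℕ :=
  sInf {N : ℕ | ∀ χ : Finset (Fin N) → Fin q,
    ∃ f : V ↪ Fin N, ∃ c : Fin q, ∀ e ∈ E, χ (e.map f) = c}

/-! ### Finiteness: Ramsey's theorem for hypergraphs -/

theorem exists_large_homogeneous (q k : ℕ) [NeZero q] (n : ℕ) :
    ∃ N : ℕ, ∀ S : Finset ℕ, N ≤ S.card → ∀ χ : Finset ℕ → Fin q,
      ∃ T ⊆ S, T.card = n ∧ ∃ c, ∀ e ⊆ T, e.card = k → χ e = c := by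
  induction k generalizing n with
  | zero =>
    refine ⟨n, fun S hS χ => ?_⟩
    obtain ⟨T, hTS, hT⟩ := exists_subset_card_eq hS
    refine ⟨T, hTS, hT, χ ∅, fun e _ he => ?_⟩
    rw [card_eq_zero.mp he]
  | succ k ih =>
    have prehomogeneous : ∀ m : ℕ, ∃ N : ℕ, ∀ S : Finset ℕ, N ≤ S.card →
        ∀ χ : Finset ℕ → Fin q, ∃ A ⊆ S, A.card = m ∧ ∃ col : ℕ → Fin q,
          ∀ e ⊆ A, e.card = k + 1 → ∀ v ∈ e, (∀ u ∈ e, v ≤ u) → χ e = col v := by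
      intro m
      induction m with
      | zero =>
        refine ⟨0, fun S _ χ => ⟨∅, by simp, by simp, fun _ => 0, ?_⟩⟩
        intro e he hek
        rw [subset_empty.mp he] at hek
        simp at hek
      | succ m ihm =>
        obtain ⟨N', hN'⟩ := ihm
        obtain ⟨N, hN⟩ := ih N'
        refine ⟨N + 1, fun S hS χ => ?_⟩
        have hne : S.Nonempty := card_pos.mp (by omega)
        set v := S.min' hne with hv
        have hvS : v ∈ S := S.min'_mem hne
        obtain ⟨T, hTS, hTc, c, hc⟩ := hN (S.erase v)
          (by rw [card_erase_of_mem hvS]; omega) (fun e => χ (insert v e))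
        obtain ⟨A, hAT, hAm, col, hcol⟩ := hN' T hTc.ge χ
        have hvT : v ∉ T := fun h => by simpa using hTS h
        have hvA : v ∉ A := fun h => hvT (hAT h)
        have hAS : A ⊆ S := hAT.trans (hTS.trans (erase_subset _ _))
        refine ⟨insert v A, insert_subset hvS hAS, by simp [hvA, hAm],
          fun u => if u = v then c else col u, fun e he hek u hu humin => ?_⟩
        by_cases huv : u = v
        · rw [huv] at hu
          have := hc (e.erase v) ((subset_insert_iff.mp he).trans hAT)
            (by rw [card_erase_of_mem hu]; omega)
          simpa [insert_erase hu, huv] using this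
        · have hve : v ∉ e := by
            intro hve
            have h1 := humin v hve
            have h2 : v ≤ u := by
              rcases mem_insert.mp (he hu) with h | h
              · exact h.ge
              · exact S.min'_le _ (hAS h)
            omega
          simp only [huv, if_false]
          exact hcol e ((subset_insert_iff_of_notMem hve).mp he) hek u hu humin
    obtain ⟨N, hN⟩ := prehomogeneous (q * n)
    refine ⟨N, fun S hS χ => ?_⟩
    obtain ⟨A, hAS, hA, col, hcol⟩ := hN S hS χ
    obtain ⟨c, -, hc⟩ := exists_le_card_fiber_of_mul_le_card_of_maps_to
      (s := A) (t := (univ : Finset (Fin q))) (f := col) (n := n) (by simp)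
      ⟨0, mem_univ _⟩ (by simp [hA])
    obtain ⟨T, hTA, hT⟩ := exists_subset_card_eq hc
    refine ⟨T, (hTA.trans (filter_subset _ _)).trans hAS, hT, c, fun e he hek => ?_⟩
    have hne : e.Nonempty := card_pos.mp (by omega)
    rw [hcol e ((he.trans hTA).trans (filter_subset _ _)) hek (e.min' hne) (e.min'_mem hne)
      fun u hu => e.min'_le u hu]
    exact (mem_filter.mp (hTA (he (e.min'_mem hne)))).2

theorem le_hypRamsey {q k n B : ℕ} [NeZero q] {E : Finset (Finset (Fin n))}
    (hE : ∀ e ∈ E, e.card = k) (ψ : Finset ℕ → Fin q)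
    (hψ : ∀ f : Fin n → ℕ, Function.Injective f → (∀ v, f v < B) →
      ∀ c, ∃ e ∈ E, ψ (e.image f) ≠ c) :
    B ≤ hypRamsey q E := by
  refine le_csInf ?_ ?_
  · obtain ⟨N, hN⟩ := exists_large_homogeneous q k n
    refine ⟨N, fun χ => ?_⟩
    obtain ⟨T, hTS, hT, c, hc⟩ := hN (range N) (by simp)
      (fun e => χ (univ.filter fun i : Fin N => (i : ℕ) ∈ e))
    let g : Fin n ↪ ℕ := (T.orderEmbOfFin hT).toEmbedding
    have hg : ∀ v, g v ∈ T := fun v => T.orderEmbOfFin_mem hT v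
    refine ⟨⟨fun v => ⟨g v, mem_range.mp (hTS (hg v))⟩, fun a b h => ?_⟩, c, fun e he => ?_⟩
    · exact g.injective (by simpa using h)
    · rw [← hc (e.map g) (fun x hx => ?_) (by simp [hE e he])]
      · congr 1
        ext i
        simp only [mem_map, mem_filter, mem_univ, true_and, Fin.ext_iff]
        rfl
      · obtain ⟨v, -, rfl⟩ := mem_map.mp hx
        exact hg v
  · intro N hN
    by_contra hlt
    obtain ⟨f, c, hc⟩ := hN (fun e => ψ (e.image Fin.val))
    obtain ⟨e, he, hne⟩ := hψ (fun v => (f v : ℕ)) (fun a b h => f.injective (Fin.ext h))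
      (fun v => (f v).isLt.trans (by omega)) c
    apply hne
    rw [← hc e he]
    congr 1
    ext x
    simp

/-! ### Binary splitting levels -/

/-- The least `h` such that `x` and `y` agree after deleting their last `h` binary digits. -/
def splitLevel (x y : ℕ) : ℕ :=
  Nat.find (p := fun h => x / 2 ^ h = y / 2 ^ h) ⟨x + y, by
    rw [Nat.div_eq_of_lt, Nat.div_eq_of_lt]
    · exact lt_of_le_of_lt (Nat.le_add_left _ _) Nat.lt_two_pow_self
    · exact lt_of_le_of_lt (Nat.le_add_right _ _) Nat.lt_two_pow_self⟩

theorem splitLevel_le_iff {x y h : ℕ} : splitLevel x y ≤ h ↔ x / 2 ^ h = y / 2 ^ h := by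
  unfold splitLevel
  rw [Nat.find_le_iff]
  constructor
  · rintro ⟨m, hm, hxy⟩
    obtain ⟨r, rfl⟩ := Nat.exists_eq_add_of_le hm
    rw [pow_add, ← Nat.div_div_eq_div_mul, ← Nat.div_div_eq_div_mul, hxy]
  · exact fun hxy => ⟨h, le_rfl, hxy⟩

theorem lt_splitLevel_iff {x y h : ℕ} : h < splitLevel x y ↔ x / 2 ^ h ≠ y / 2 ^ h := by
  rw [← not_le, splitLevel_le_iff]

theorem splitLevel_comm (x y : ℕ) : splitLevel x y = splitLevel y x :=
  le_antisymm (splitLevel_le_iff.mpr (splitLevel_le_iff.mp le_rfl).symm)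
    (splitLevel_le_iff.mpr (splitLevel_le_iff.mp le_rfl).symm)

@[simp] theorem splitLevel_self (x : ℕ) : splitLevel x x = 0 :=
  Nat.le_zero.mp (splitLevel_le_iff.mpr rfl)

/-- In the binary tree spanned by `S`, the odd one out of every triple is its least element. -/
def Descends (S : Finset ℕ) : Prop :=
  ∀ x ∈ S, ∀ y ∈ S, ∀ z ∈ S, y ≠ z → splitLevel y z < splitLevel x y → x < y

/-- In the binary tree spanned by `S`, the odd one out of every triple is its largest element. -/
def Ascends (S : Finset ℕ) : Prop :=
  ∀ x ∈ S, ∀ y ∈ S, ∀ z ∈ S, y ≠ z → splitLevel y z < splitLevel x y → y < x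

/-- The top branching of the binary tree spanned by `S` separates a single element. -/
def IsolatedTop (S : Finset ℕ) : Prop :=
  ∃ x ∈ S, ∀ y ∈ S, ∀ z ∈ S, y ≠ x → z ≠ x → splitLevel y z < splitLevel x y

/-- The set of binary positions at which the tree spanned by `S` branches. -/
def branchPositions (S : Finset ℕ) : Finset ℕ :=
  S.offDiag.image fun p => splitLevel p.1 p.2 - 1

variable {U : Type*}

/-- The value `d v` records the level at which `f v` leaves a fixed root-to-node path of the
binary tree (`0` if it does not leave), and `left t` that whatever leaves the path at level `t`
does so to the left. -/
structure IsSpine (V : Finset U) (f d : U → ℕ) (left : ℕ → Prop) : Prop where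
  apart : ∀ u ∈ V, ∀ v ∈ V, d v < d u → splitLevel (f u) (f v) = d u
  near : ∀ u ∈ V, ∀ v ∈ V, ∀ x ∈ V, d u = d v → d u ≤ d x → 0 < d x →
    splitLevel (f u) (f v) < d x
  lt_of_left : ∀ u ∈ V, ∀ v ∈ V, d v < d u → left (d u) → f u < f v
  lt_of_not_left : ∀ u ∈ V, ∀ v ∈ V, d v < d u → ¬ left (d u) → f v < f u

theorem isSpine_of_center (V : Finset U) (f : U → ℕ) (p h : ℕ) :
    IsSpine V f (fun v => if splitLevel (f v) p ≤ h then 0 else splitLevel (f v) p)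
      (fun t => p / 2 ^ (t - 1) % 2 = 1) := by
  have halves : ∀ {x t : ℕ}, t ≠ 0 → splitLevel x p = t →
      x / 2 ^ (t - 1) / 2 = p / 2 ^ (t - 1) / 2 ∧ x / 2 ^ (t - 1) ≠ p / 2 ^ (t - 1) := by
    intro x t ht hx
    obtain ⟨r, rfl⟩ := Nat.exists_eq_succ_of_ne_zero ht
    have h1 := splitLevel_le_iff.mp hx.le
    rw [Nat.succ_eq_add_one, pow_succ, ← Nat.div_div_eq_div_mul, ← Nat.div_div_eq_div_mul] at h1
    exact ⟨h1, lt_splitLevel_iff.mp (by rw [hx]; simp)⟩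
  have leave : ∀ {u v : U},
      (if splitLevel (f v) p ≤ h then 0 else splitLevel (f v) p) <
        (if splitLevel (f u) p ≤ h then 0 else splitLevel (f u) p) →
      h < splitLevel (f u) p ∧ splitLevel (f v) p < splitLevel (f u) p := by
    intro u v huv
    split_ifs at huv <;> omega
  have order : ∀ {u v : U}, h < splitLevel (f u) p → splitLevel (f v) p < splitLevel (f u) p →
      f v / 2 ^ (splitLevel (f u) p - 1) = p / 2 ^ (splitLevel (f u) p - 1) := by
    intro u v hu huv
    exact splitLevel_le_iff.mp (by omega)
  refine ⟨?_, ?_, ?_, ?_⟩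
  · intro u _ v _ huv
    obtain ⟨hu, hv⟩ := leave huv
    simp only [if_neg hu.not_ge]
    refine le_antisymm ?_ ?_
    · rw [splitLevel_le_iff, splitLevel_le_iff.mp (le_refl (splitLevel (f u) p)),
        splitLevel_le_iff.mp hv.le]
    · have := lt_splitLevel_iff (x := f u) (y := f v) (h := splitLevel (f u) p - 1)
      rw [order hu hv] at this
      have := this.mpr (halves (by omega) rfl).2
      omega
  · intro u _ v _ x _ huv hux hx
    by_cases hu : splitLevel (f u) p ≤ h
    · have hv : splitLevel (f v) p ≤ h := by
        by_contra hv
        simp only [if_pos hu, if_neg hv] at huv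
        omega
      have hx' : h < splitLevel (f x) p := by
        by_contra hx'
        simp [not_lt.mp hx'] at hx
      rw [if_neg hx'.not_ge]
      refine lt_of_le_of_lt ?_ hx'
      rw [splitLevel_le_iff, splitLevel_le_iff.mp hu, splitLevel_le_iff.mp hv]
    · have hv : ¬ splitLevel (f v) p ≤ h := by
        intro hv
        simp only [if_pos hv, if_neg hu] at huv
        omega
      simp only [if_neg hu, if_neg hv] at huv hux
      refine lt_of_lt_of_le ?_ hux
      have h1 := halves (x := f u) (t := splitLevel (f u) p) (by omega) rfl
      have h2 := halves (x := f v) (t := splitLevel (f u) p) (by omega) huv.symm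
      have : splitLevel (f u) (f v) ≤ splitLevel (f u) p - 1 := by
        rw [splitLevel_le_iff]
        omega
      omega
  · intro u _ v _ huv hl
    obtain ⟨hu, hv⟩ := leave huv
    simp only [if_neg hu.not_ge] at hl
    have h1 := halves (x := f u) (t := splitLevel (f u) p) (by omega) rfl
    have h2 := order hu hv
    refine lt_of_not_ge fun hle => ?_
    have := Nat.div_le_div_right (c := 2 ^ (splitLevel (f u) p - 1)) hle
    omega
  · intro u _ v _ huv hl
    obtain ⟨hu, hv⟩ := leave huv
    simp only [if_neg hu.not_ge] at hl
    have h1 := halves (x := f u) (t := splitLevel (f u) p) (by omega) rfl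
    have h2 := order hu hv
    refine lt_of_not_ge fun hle => ?_
    have := Nat.div_le_div_right (c := 2 ^ (splitLevel (f u) p - 1)) hle
    omega

theorem exists_center {f : U → ℕ} {q : ℕ} (hq : 1 ≤ q) (H a : ℕ) (V : Finset U)
    (hf : Set.InjOn f V) (hV : ∀ v ∈ V, f v / 2 ^ H = a) (hqV : q < V.card) :
    ∃ p h, p / 2 ^ H = a ∧ q < 2 * (V.filter fun v => splitLevel (f v) p ≤ h).card ∧
      (V.filter fun v => splitLevel (f v) p ≤ h).card ≤ q ∧
      ∀ t, h < t → 2 * (V.filter fun v => splitLevel (f v) p = t).card ≤ V.card := by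
  induction H generalizing a V with
  | zero =>
    exfalso
    have : V.card ≤ 1 := card_le_one.mpr fun x hx y hy => hf hx hy <| by
      simpa using (hV x hx).trans (hV y hy).symm
    omega
  | succ H ih =>
    have hhalf : ∀ v ∈ V, f v / 2 ^ H / 2 = a := fun v hv => by
      rw [Nat.div_div_eq_div_mul, ← pow_succ]
      exact hV v hv
    obtain ⟨b, hb, hbc⟩ : ∃ b, b / 2 = a ∧
        V.card ≤ 2 * (V.filter fun v => f v / 2 ^ H = b).card := by
      have hsplit := card_filter_add_card_filter_not (s := V) fun v => f v / 2 ^ H = 2 * a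
      have hcongr : (V.filter fun v => ¬ f v / 2 ^ H = 2 * a) =
          V.filter fun v => f v / 2 ^ H = 2 * a + 1 :=
        filter_congr fun v hv => by have := hhalf v hv; omega
      rw [hcongr] at hsplit
      by_cases hc : V.card ≤ 2 * (V.filter fun v => f v / 2 ^ H = 2 * a).card
      · exact ⟨2 * a, by omega, hc⟩
      · exact ⟨2 * a + 1, by omega, by omega⟩
    set V' := V.filter fun v => f v / 2 ^ H = b with hV'
    have hout : ∀ p, p / 2 ^ H = b → ∀ t, H < t →
        2 * (V.filter fun v => splitLevel (f v) p = t).card ≤ V.card := by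
      intro p hp t ht
      have hsub : (V.filter fun v => splitLevel (f v) p = t) ⊆
          V.filter fun v => ¬ f v / 2 ^ H = b := by
        refine monotone_filter_right V fun v _ hv hvb => ?_
        have : splitLevel (f v) p ≤ H := splitLevel_le_iff.mpr (hvb.trans hp.symm)
        omega
      have h1 := card_le_card hsub
      have h2 := card_filter_add_card_filter_not (s := V) fun v => f v / 2 ^ H = b
      rw [← hV'] at h2
      omega
    have hpa : ∀ p, p / 2 ^ H = b → p / 2 ^ (H + 1) = a := fun p hp => by
      rw [pow_succ, ← Nat.div_div_eq_div_mul, hp, hb]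
    by_cases hc : V'.card ≤ q
    · obtain ⟨v₀, hv₀⟩ : V'.Nonempty := card_pos.mp (by omega)
      have hp : f v₀ / 2 ^ H = b := (mem_filter.mp hv₀).2
      have heq : (V.filter fun v => splitLevel (f v) (f v₀) ≤ H) = V' :=
        filter_congr fun v _ => by rw [splitLevel_le_iff, hp]
      exact ⟨f v₀, H, hpa _ hp, by rw [heq]; omega, by rw [heq]; exact hc, hout _ hp⟩
    · obtain ⟨p, h, hp, h1, h2, h3⟩ := ih b V' (hf.mono (coe_subset.mpr (filter_subset _ _)))
        (fun v hv => (mem_filter.mp hv).2) (by omega)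
      have hlevel : ∀ t ≤ H, (V'.filter fun v => splitLevel (f v) p = t) =
          V.filter fun v => splitLevel (f v) p = t := by
        intro t ht
        rw [hV', filter_filter]
        refine filter_congr fun v _ => ⟨fun h => h.2, fun h => ⟨?_, h⟩⟩
        rw [← hp]
        exact splitLevel_le_iff.mp (by omega)
      have hh : h ≤ H := by
        by_contra hlt
        have : (V'.filter fun v => splitLevel (f v) p ≤ h) = V' := by
          refine filter_true_of_mem fun v hv => ?_
          have : splitLevel (f v) p ≤ H :=
            splitLevel_le_iff.mpr ((mem_filter.mp hv).2.trans hp.symm)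
          omega
        rw [this] at h2
        omega
      have hW : (V'.filter fun v => splitLevel (f v) p ≤ h) =
          V.filter fun v => splitLevel (f v) p ≤ h := by
        rw [hV', filter_filter]
        refine filter_congr fun v _ => ⟨fun h => h.2, fun h => ⟨?_, h⟩⟩
        rw [← hp]
        exact splitLevel_le_iff.mp (by omega)
      rw [hW] at h1 h2
      refine ⟨p, h, hpa p hp, h1, h2, fun t ht => ?_⟩
      by_cases htH : t ≤ H
      · have := h3 t ht
        rw [hlevel t htH] at this
        have : V'.card ≤ V.card := card_le_card (filter_subset _ _)
        omega
      · exact hout p hp t (by omega)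

theorem exists_isSpine {V : Finset U} {f : U → ℕ} {q B : ℕ} (hq : 1 ≤ q)
    (hf : Set.InjOn f V) (hB : ∀ v ∈ V, f v < 2 ^ B) (hqV : q < V.card) :
    ∃ d left, IsSpine V f d left ∧ q < 2 * (V.filter fun v => d v = 0).card ∧
      (V.filter fun v => d v = 0).card ≤ q ∧
      (∀ v ∈ V, d v ≤ B) ∧
      ∀ t, 0 < t → 2 * (V.filter fun v => d v = t).card ≤ V.card := by
  obtain ⟨p, h, hp, h1, h2, h3⟩ := exists_center hq B 0 V hf
    (fun v hv => Nat.div_eq_of_lt (hB v hv)) hqV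
  have hW : (V.filter fun v => (if splitLevel (f v) p ≤ h then 0 else splitLevel (f v) p) = 0) =
      V.filter fun v => splitLevel (f v) p ≤ h :=
    filter_congr fun v _ => by split_ifs <;> omega
  refine ⟨_, _, isSpine_of_center V f p h, by rwa [hW], by rwa [hW], fun v hv => ?_,
    fun t ht => ?_⟩
  · have : splitLevel (f v) p ≤ B := by
      rw [splitLevel_le_iff, hp, Nat.div_eq_of_lt (hB v hv)]
    split_ifs <;> omega
  · by_cases hth : h < t
    · have := h3 t hth
      refine le_trans (Nat.mul_le_mul_left 2 (card_le_card ?_)) this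
      refine monotone_filter_right V fun v _ hv => ?_
      split_ifs at hv <;> omega
    · rw [filter_false_of_mem]
      · simp
      · intro v _
        split_ifs <;> omega

/-! ### Star edges and the stepping-up argument -/

/-- All vertices of `e` but one lie in a star of `Γ`. -/
def IsStarEdge (Γ : SimpleGraph U) (e : Finset U) : Prop :=
  ∃ v ∈ e, ∃ z ∈ e, z ≠ v ∧ ∀ u ∈ e, u ≠ v → u ≠ z → Γ.Adj v u

/-- Any two disjoint sets of at least `s` vertices are joined by an edge. -/
def IsJoining (Γ : SimpleGraph U) (s : ℕ) : Prop :=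
  ∀ A B : Finset U, s ≤ A.card → s ≤ B.card → Disjoint A B → ∃ a ∈ A, ∃ b ∈ B, Γ.Adj a b

/-- No embedding of at least `m` vertices of `Γ` into `{0, …, B - 1}` makes all images of star
edges of size `k` receive the same colour under `φ`. -/
def Avoids [DecidableEq U] (Γ : SimpleGraph U) (k m B : ℕ) {α : Type*} (φ : Finset ℕ → α) :
    Prop :=
  ∀ V : Finset U, m ≤ V.card → ∀ f : U → ℕ, Set.InjOn f V → (∀ v ∈ V, f v < B) →
    ∀ c, ∃ e ⊆ V, e.card = k ∧ IsStarEdge Γ e ∧ φ (e.image f) ≠ c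

theorem IsJoining.card_lowDegree_le [DecidableEq U] {Γ : SimpleGraph U} [DecidableRel Γ.Adj]
    {s : ℕ} (hΓ : IsJoining Γ s) (j : ℕ) {Y W : Finset U} (hYW : Disjoint Y W)
    (hW : j * s ≤ W.card) :
    (Y.filter fun v => (W.filter (Γ.Adj v)).card < j).card ≤ j * s := by
  induction j generalizing W with
  | zero => simp
  | succ j ih =>
    obtain ⟨W₁, hW₁, hc₁⟩ := exists_subset_card_eq (s := W) (n := s) (by nlinarith)
    have hsd : (W \ W₁).card = W.card - s := by rw [card_sdiff_of_subset hW₁, hc₁]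
    have h2 := ih (W := W \ W₁) (hYW.mono_right sdiff_subset) (by
      rw [hsd]; rw [add_mul, one_mul] at hW; omega)
    have h1 : (Y.filter fun v => ∀ w ∈ W₁, ¬ Γ.Adj v w).card ≤ s := by
      by_contra hlt
      obtain ⟨a, ha, b, hb, hab⟩ := hΓ (Y.filter fun v => ∀ w ∈ W₁, ¬ Γ.Adj v w) W₁
        (by omega) hc₁.ge
        ((hYW.mono_right hW₁).mono_left (filter_subset _ _))
      exact (mem_filter.mp ha).2 b hb hab
    have hsub : (Y.filter fun v => (W.filter (Γ.Adj v)).card < j + 1) ⊆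
        (Y.filter fun v => ∀ w ∈ W₁, ¬ Γ.Adj v w) ∪
          (Y.filter fun v => ((W \ W₁).filter (Γ.Adj v)).card < j) := by
      intro v hv
      rw [mem_filter] at hv
      rw [mem_union, mem_filter, mem_filter]
      by_cases hno : ∀ w ∈ W₁, ¬ Γ.Adj v w
      · exact Or.inl ⟨hv.1, hno⟩
      · refine Or.inr ⟨hv.1, ?_⟩
        push Not at hno
        obtain ⟨w, hw, hvw⟩ := hno
        have : ((W \ W₁).filter (Γ.Adj v)).card < (W.filter (Γ.Adj v)).card := by
          refine card_lt_card (ssubset_iff_of_subset (filter_subset_filter _ sdiff_subset) |>.mpr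
            ⟨w, mem_filter.mpr ⟨hW₁ hw, hvw⟩, ?_⟩)
          simp [hw]
        omega
    calc _ ≤ _ := card_le_card hsub
      _ ≤ _ := card_union_le _ _
      _ ≤ s + j * s := add_le_add h1 h2
      _ = (j + 1) * s := by ring

namespace IsSpine

variable {V : Finset U} {f d : U → ℕ} {left : ℕ → Prop}

theorem apart_symm (h : IsSpine V f d left) {u v : U} (hu : u ∈ V) (hv : v ∈ V)
    (huv : d u < d v) : splitLevel (f u) (f v) = d v := by
  rw [splitLevel_comm]
  exact h.apart v hv u hu huv

theorem splitLevel_lt (h : IsSpine V f d left) {a b u : U} (ha : a ∈ V) (hb : b ∈ V)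
    (hu : u ∈ V) (hau : d a < d u) (hbu : d b < d u) : splitLevel (f a) (f b) < d u := by
  rcases lt_trichotomy (d a) (d b) with hab | hab | hab
  · rwa [h.apart_symm ha hb hab]
  · exact h.near a ha b hb u hu hab hau.le (by omega)
  · rwa [h.apart a ha b hb hab]

variable {e : Finset U} {w : U}

theorem splitLevel_eq_max (h : IsSpine V f d left) (he : e ⊆ V) (hd : Set.InjOn d e)
    {a b : U} (ha : a ∈ e) (hb : b ∈ e) (hab : a ≠ b) :
    splitLevel (f a) (f b) = max (d a) (d b) := by
  rcases lt_trichotomy (d a) (d b) with hlt | heq | hlt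
  · rw [h.apart_symm (he ha) (he hb) hlt, max_eq_right hlt.le]
  · exact absurd (hd ha hb heq) hab
  · rw [h.apart _ (he ha) _ (he hb) hlt, max_eq_left hlt.le]

theorem descends_image (h : IsSpine V f d left) (he : e ⊆ V) (hd : Set.InjOn d e)
    (hl : ∀ x ∈ e, 0 < d x → left (d x)) : Descends (e.image f) := by
  simp only [Descends, forall_mem_image]
  intro x hx y hy z hz hyz hlt
  have hyz' : y ≠ z := fun hh => hyz (by rw [hh])
  have hxy : x ≠ y := fun hh => by simp [hh] at hlt
  rw [h.splitLevel_eq_max he hd hy hz hyz', h.splitLevel_eq_max he hd hx hy hxy] at hlt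
  exact h.lt_of_left x (he hx) y (he hy) (by omega) (hl x hx (by omega))

theorem ascends_image (h : IsSpine V f d left) (he : e ⊆ V) (hd : Set.InjOn d e)
    (hl : ∀ x ∈ e, 0 < d x → ¬ left (d x)) : Ascends (e.image f) := by
  simp only [Ascends, forall_mem_image]
  intro x hx y hy z hz hyz hlt
  have hyz' : y ≠ z := fun hh => hyz (by rw [hh])
  have hxy : x ≠ y := fun hh => by simp [hh] at hlt
  rw [h.splitLevel_eq_max he hd hy hz hyz', h.splitLevel_eq_max he hd hx hy hxy] at hlt
  exact h.lt_of_not_left x (he hx) y (he hy) (by omega) (hl x hx (by omega))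

theorem branchPositions_image [DecidableEq U] (h : IsSpine V f d left) (hf : Set.InjOn f V)
    (he : e ⊆ V) (hw : w ∈ V) (hdw : d w = 0) (hpos : ∀ x ∈ e, 0 < d x) (hd : Set.InjOn d e) :
    branchPositions ((insert w e).image f) = e.image fun v => d v - 1 := by
  have hV : insert w e ⊆ V := insert_subset hw he
  have hd' : Set.InjOn d (insert w e : Finset U) := by
    intro a ha b hb hab
    rw [mem_coe, mem_insert] at ha hb
    rcases ha with rfl | ha <;> rcases hb with rfl | hb
    · rfl
    · have := hpos b hb; omega
    · have := hpos a ha; omega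
    · exact hd ha hb hab
  have hmem : ∀ a ∈ insert w e, 0 < d a → a ∈ e := by
    intro a ha hda
    rcases mem_insert.mp ha with rfl | ha
    · omega
    · exact ha
  ext t
  simp only [branchPositions, mem_image, mem_offDiag, Prod.exists]
  constructor
  · rintro ⟨x, y, ⟨⟨a, ha, rfl⟩, ⟨b, hb, rfl⟩, hab⟩, rfl⟩
    have hab' : a ≠ b := fun hh => hab (by rw [hh])
    rw [h.splitLevel_eq_max hV hd' ha hb hab']
    rcases lt_or_gt_of_ne (fun hh => hab' (hd' ha hb hh)) with hlt | hlt
    · exact ⟨b, hmem b hb (by omega), by rw [max_eq_right hlt.le]⟩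
    · exact ⟨a, hmem a ha (by omega), by rw [max_eq_left hlt.le]⟩
  · rintro ⟨a, ha, rfl⟩
    have hda := hpos a ha
    refine ⟨f a, f w, ⟨⟨a, mem_insert_of_mem ha, rfl⟩, ⟨w, mem_insert_self _ _, rfl⟩, ?_⟩, ?_⟩
    · intro hh
      rw [hf (he ha) hw hh] at hda
      omega
    · rw [h.apart a (he ha) w hw (by omega)]

end IsSpine

theorem exists_level_split {M : Finset U} {d : U → ℕ} {s : ℕ} (hs : 1 ≤ s)
    (h : ∀ t, (M.filter fun v => t < d v).card < s ∨ (M.filter fun v => d v ≤ t).card < s) :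
    ∃ t, M.card ≤ 2 * s + (M.filter fun v => d v = t).card := by
  have hex : ∃ t, (M.filter fun v => t < d v).card < s := by
    refine ⟨M.sup d, ?_⟩
    rw [filter_false_of_mem fun v hv => (le_sup hv).not_gt]
    simpa
  classical
  set t := Nat.find hex with ht
  have h1 : (M.filter fun v => t < d v).card < s := Nat.find_spec hex
  have h2 : (M.filter fun v => d v < t).card ≤ s := by
    rcases Nat.eq_zero_or_pos t with h0 | hpos
    · simp [h0]
    · have hge := Nat.find_min hex (m := t - 1) (by omega)
      have hle := (h (t - 1)).resolve_left hge
      refine le_trans (card_le_card ?_) hle.le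
      exact monotone_filter_right M fun v _ hv => by omega
  refine ⟨t, ?_⟩
  have hsub : M ⊆ (M.filter fun v => t < d v) ∪
      ((M.filter fun v => d v < t) ∪ M.filter fun v => d v = t) := by
    intro v hv
    simp only [mem_union, mem_filter, hv, true_and]
    omega
  have h3 := card_le_card hsub
  have h4 := card_union_le (M.filter fun v => t < d v)
    ((M.filter fun v => d v < t) ∪ M.filter fun v => d v = t)
  have h5 := card_union_le (M.filter fun v => d v < t) (M.filter fun v => d v = t)
  omega

/-- A colouring of `k`-sets steps up to a colouring of `(k + 1)`-sets that remembers the old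
colour on descending and on ascending sets, and rules out two adjacent vertices leaving a spine
at different levels when the lower one does not leave it alone. -/
theorem Avoids.step [DecidableEq U] {Γ : SimpleGraph U} [DecidableRel Γ.Adj] {s k m B : ℕ}
    (hΓ : IsJoining Γ s) (hs : 1 ≤ s) (hk : 2 ≤ k) {α β : Type*}
    {φ : Finset ℕ → α} {ψ : Finset ℕ → β} (hφ : Avoids Γ k m B φ)
    (hψ : ∀ S T, (Descends S ∧ Descends T) ∨ (Ascends S ∧ Ascends T) → ψ S = ψ T →
      φ (branchPositions S) = φ (branchPositions T))
    (hmulti : ∀ (V : Finset U) (f d : U → ℕ) (left : ℕ → Prop) (c : β), IsSpine V f d left →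
      Set.InjOn f V →
      (∀ e ⊆ V, e.card = k + 1 → IsStarEdge Γ e → ψ (e.image f) = c) →
      ∀ u ∈ V, ∀ v ∈ V, ∀ v' ∈ V, 0 < d v → d v < d u → v' ≠ v → d v' = d v → Γ.Adj u v →
        k + 1 ≤ ((V.filter fun w => d w = 0).filter (Γ.Adj v)).card → False) :
    Avoids Γ (k + 1) (8 * (m + (k + 4) * s)) (2 ^ B) ψ := by
  intro V hV f hf hB c
  by_contra! hcon
  have hks : (k + 4) * s = (k + 1) * s + 3 * s := by ring
  have hks' : s ≤ (k + 1) * s := by nlinarith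
  rw [hks] at hV
  obtain ⟨d, left, hsp, hWlo, hWhi, hdB, hfib⟩ := exists_isSpine (q := V.card / 4)
    (by omega) hf hB (by omega)
  set W := V.filter fun v => d v = 0 with hWdef
  have hlow := hΓ.card_lowDegree_le (k + 1) (Y := V.filter fun v => ¬ d v = 0) (W := W)
    (disjoint_filter_filter_not V V _).symm (by omega)
  set low := (V.filter fun v => ¬ d v = 0).filter fun v => (W.filter (Γ.Adj v)).card < k + 1
  classical
  set M := V.filter fun v => (d v ≠ 0 ∧ k + 1 ≤ (W.filter (Γ.Adj v)).card) ∧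
    ∃ v' ∈ V, v' ≠ v ∧ d v' = d v with hMdef
  set S := V.filter fun v => (d v ≠ 0 ∧ k + 1 ≤ (W.filter (Γ.Adj v)).card) ∧
    ∀ v' ∈ V, d v' = d v → v' = v with hSdef
  have hM : 2 * M.card ≤ 4 * s + V.card := by
    obtain ⟨t, ht⟩ := exists_level_split (M := M) (d := d) hs fun t => by
      by_contra! hlarge
      obtain ⟨u, hu, v, hv, huv⟩ := hΓ _ _ hlarge.1 hlarge.2 <| by
        rw [disjoint_filter]
        intro x _ h1 h2
        omega
      simp only [hMdef, mem_filter] at hu hv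
      obtain ⟨⟨hvV, ⟨hdv, hdeg⟩, v', hv', hne, heq⟩, hvt⟩ := hv
      exact hmulti V f d left c hsp hf hcon u hu.1.1 v hvV v' hv' (by omega) (by omega) hne heq
        huv hdeg
    rcases Nat.eq_zero_or_pos t with h0 | hpos
    · have : (M.filter fun v => d v = t) = ∅ := by
        refine filter_false_of_mem fun v hv => ?_
        rw [h0]
        exact (mem_filter.mp hv).2.1.1
      rw [this, card_empty] at ht
      omega
    · have h1 := hfib t hpos
      have h2 : (M.filter fun v => d v = t).card ≤ (V.filter fun v => d v = t).card :=
        card_le_card (filter_subset_filter _ (filter_subset _ _))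
      omega
  have hcover : V ⊆ (W ∪ low) ∪ (M ∪ S) := by
    intro v hv
    simp only [hWdef, low, hMdef, hSdef, mem_union, mem_filter, hv, true_and]
    by_cases h0 : d v = 0
    · exact Or.inl (Or.inl h0)
    · by_cases hdeg : (W.filter (Γ.Adj v)).card < k + 1
      · exact Or.inl (Or.inr ⟨h0, hdeg⟩)
      · refine Or.inr ?_
        by_cases hm : ∃ v' ∈ V, v' ≠ v ∧ d v' = d v
        · exact Or.inl ⟨⟨h0, not_lt.mp hdeg⟩, hm⟩
        · push Not at hm
          exact Or.inr ⟨⟨h0, not_lt.mp hdeg⟩, fun v' hv' he => by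
            by_contra hne
            exact hm v' hv' hne he⟩
  have hS : V.card ≤ W.card + low.card + (M.card + S.card) :=
    (card_le_card hcover).trans <| (card_union_le _ _).trans <|
      add_le_add (card_union_le _ _) (card_union_le _ _)
  obtain ⟨X, hXS, hXm, hdir⟩ : ∃ X ⊆ S, m ≤ X.card ∧
      ((∀ x ∈ X, left (d x)) ∨ ∀ x ∈ X, ¬ left (d x)) := by
    have hsplit := card_filter_add_card_filter_not (s := S) fun v => left (d v)
    by_cases hl : m ≤ (S.filter fun v => left (d v)).card
    · exact ⟨_, filter_subset _ _, hl, Or.inl fun x hx => (mem_filter.mp hx).2⟩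
    · exact ⟨_, filter_subset _ _, by omega, Or.inr fun x hx => (mem_filter.mp hx).2⟩
  have hXV : X ⊆ V := hXS.trans (filter_subset _ _)
  have hXpos : ∀ x ∈ X, 0 < d x := fun x hx =>
    Nat.pos_of_ne_zero (mem_filter.mp (hXS hx)).2.1.1
  have hXinj : Set.InjOn d X := fun a ha b hb hab =>
    (mem_filter.mp (hXS hb)).2.2 a (hXV ha) hab
  have extend : ∀ e ⊆ X, e.card = k → IsStarEdge Γ e → ∃ T : Finset ℕ, ψ T = c ∧
      branchPositions T = (e.image fun v => d v - 1) ∧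
      ((∀ x ∈ X, left (d x)) → Descends T) ∧ ((∀ x ∈ X, ¬ left (d x)) → Ascends T) := by
    rintro e heX hek ⟨v, hv, z, hz, hzv, hadj⟩
    obtain ⟨w, hw⟩ : (W.filter (Γ.Adj v)).Nonempty := card_pos.mp (by
      have := (mem_filter.mp (hXS (heX hv))).2.1.2
      omega)
    simp only [hWdef, mem_filter] at hw
    obtain ⟨⟨hwV, hdw⟩, hvw⟩ := hw
    have hwe : w ∉ e := fun hwe => by
      have := hXpos w (heX hwe)
      omega
    have hsub : insert w e ⊆ V := insert_subset hwV (heX.trans hXV)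
    have hinj : Set.InjOn d (insert w e : Finset U) := by
      intro a ha b hb hab
      rw [mem_coe, mem_insert] at ha hb
      rcases ha with rfl | ha <;> rcases hb with rfl | hb
      · rfl
      · have := hXpos b (heX hb); omega
      · have := hXpos a (heX ha); omega
      · exact hXinj (heX ha) (heX hb) hab
    have hmem : ∀ x ∈ insert w e, 0 < d x → x ∈ X := by
      intro x hx hdx
      rcases mem_insert.mp hx with rfl | hx
      · omega
      · exact heX hx
    refine ⟨(insert w e).image f, hcon _ hsub (by rw [card_insert_of_notMem hwe, hek])
      ⟨v, mem_insert_of_mem hv, z, mem_insert_of_mem hz, hzv, fun u hu huv huz => ?_⟩,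
      hsp.branchPositions_image hf (heX.trans hXV) hwV hdw (fun x hx => hXpos x (heX hx))
        (hXinj.mono (coe_subset.mpr heX)),
      fun hl => hsp.descends_image hsub hinj fun x hx hdx => hl x (hmem x hx hdx),
      fun hl => hsp.ascends_image hsub hinj fun x hx hdx => hl x (hmem x hx hdx)⟩
    rcases mem_insert.mp hu with rfl | hu
    · exact hvw
    · exact hadj u hu huv huz
  have havoid := hφ X hXm (fun v => d v - 1)
    (fun a ha b hb hab => hXinj ha hb (by
      have := hXpos a ha
      have := hXpos b hb
      simp only at hab
      omega))
    (fun v hv => by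
      have := hXpos v hv
      have := hdB v (hXV hv)
      omega)
  obtain ⟨e₁, he₁, hk₁, hst₁, -⟩ := havoid (φ ∅)
  obtain ⟨e₂, he₂, hk₂, hst₂, hne⟩ := havoid (φ (e₁.image fun v => d v - 1))
  obtain ⟨T₁, hc₁, hb₁, hdesc₁, hasc₁⟩ := extend e₁ he₁ hk₁ hst₁
  obtain ⟨T₂, hc₂, hb₂, hdesc₂, hasc₂⟩ := extend e₂ he₂ hk₂ hst₂
  apply hne
  rw [← hb₁, ← hb₂]
  refine hψ T₂ T₁ ?_ (hc₂.trans hc₁.symm)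
  rcases hdir with hl | hl
  · exact Or.inl ⟨hdesc₂ hl, hdesc₁ hl⟩
  · exact Or.inr ⟨hasc₂ hl, hasc₁ hl⟩

/-! ### The two kinds of stepping-up colourings -/

theorem descends_triple {a b c t : ℕ} (hbc : splitLevel b c < t) (hab : splitLevel a b = t)
    (hac : splitLevel a c = t) (hb : a < b) (hc : a < c) : Descends {a, b, c} := by
  have hba := splitLevel_comm b a
  have hca := splitLevel_comm c a
  have hcb := splitLevel_comm c b
  intro x hx y hy z hz hyz hlt
  simp only [mem_insert, mem_singleton] at hx hy hz
  rcases hx with rfl | rfl | rfl <;> rcases hy with rfl | rfl | rfl <;>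
    rcases hz with rfl | rfl | rfl <;>
    first | exact absurd rfl hyz | (simp only [splitLevel_self] at hlt; omega) | omega

namespace IsSpine

variable {V : Finset U} {f d : U → ℕ} {left : ℕ → Prop} {S : Finset ℕ}

theorem not_descends_of_left (h : IsSpine V f d left) {x y z : U} (hx : x ∈ V) (hy : y ∈ V)
    (hz : z ∈ V) (hxS : f x ∈ S) (hyS : f y ∈ S) (hzS : f z ∈ S) (hyz : f y ≠ f z)
    (hd : d y = d z) (hxy : d x < d y) (hl : left (d y)) : ¬ Descends S := by
  intro hdesc
  have h1 := hdesc _ hxS _ hyS _ hzS hyz (by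
    rw [h.apart_symm hx hy hxy]
    exact h.near y hy z hz y hy hd le_rfl (by omega))
  have h2 := h.lt_of_left y hy x hx hxy hl
  omega

theorem not_ascends_of_not_left (h : IsSpine V f d left) {x y z : U} (hx : x ∈ V) (hy : y ∈ V)
    (hz : z ∈ V) (hxS : f x ∈ S) (hyS : f y ∈ S) (hzS : f z ∈ S) (hyz : f y ≠ f z)
    (hd : d y = d z) (hxy : d x < d y) (hl : ¬ left (d y)) : ¬ Ascends S := by
  intro hasc
  have h1 := hasc _ hxS _ hyS _ hzS hyz (by
    rw [h.apart_symm hx hy hxy]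
    exact h.near y hy z hz y hy hd le_rfl (by omega))
  have h2 := h.lt_of_not_left y hy x hx hxy hl
  omega

theorem not_ascends_of_left (h : IsSpine V f d left) {x y z : U} (hx : x ∈ V) (hy : y ∈ V)
    (hz : z ∈ V) (hxS : f x ∈ S) (hyS : f y ∈ S) (hzS : f z ∈ S) (hyz : f y ≠ f z)
    (hxy : d y < d x) (hxz : d z < d x) (hl : left (d x)) : ¬ Ascends S := by
  intro hasc
  have h1 := hasc _ hxS _ hyS _ hzS hyz (by
    rw [h.apart x hx y hy hxy]
    exact h.splitLevel_lt hy hz hx hxy hxz)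
  have h2 := h.lt_of_left x hx y hy hxy hl
  omega

theorem not_descends_of_not_left (h : IsSpine V f d left) {x y z : U} (hx : x ∈ V) (hy : y ∈ V)
    (hz : z ∈ V) (hxS : f x ∈ S) (hyS : f y ∈ S) (hzS : f z ∈ S) (hyz : f y ≠ f z)
    (hxy : d y < d x) (hxz : d z < d x) (hl : ¬ left (d x)) : ¬ Descends S := by
  intro hdesc
  have h1 := hdesc _ hxS _ hyS _ hzS hyz (by
    rw [h.apart x hx y hy hxy]
    exact h.splitLevel_lt hy hz hx hxy hxz)
  have h2 := h.lt_of_not_left x hx y hy hxy hl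
  omega

theorem isolatedTop_image [DecidableEq U] (h : IsSpine V f d left) {e : Finset U} {u : U}
    (he : e ⊆ V) (hu : u ∈ e) (hlt : ∀ x ∈ e, x ≠ u → d x < d u) :
    IsolatedTop (e.image f) := by
  refine ⟨f u, mem_image_of_mem f hu, ?_⟩
  simp only [forall_mem_image]
  intro y hy z hz hyu hzu
  have hy' := hlt y hy fun hh => hyu (by rw [hh])
  have hz' := hlt z hz fun hh => hzu (by rw [hh])
  rw [h.apart u (he hu) y (he hy) hy']
  exact h.splitLevel_lt (he hy) (he hz) (he hu) hy' hz'

theorem not_isolatedTop_image [DecidableEq U] (h : IsSpine V f d left) (hf : Set.InjOn f V)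
    {v v' : U} {N : Finset U} (hv : v ∈ V) (hv' : v' ∈ V) (hN : N ⊆ V) (hne : v' ≠ v)
    (hd : d v' = d v) (hpos : 0 < d v) (hN0 : ∀ x ∈ N, d x = 0) (hN2 : 1 < N.card) :
    ¬ IsolatedTop ((insert v (insert v' N)).image f) := by
  obtain ⟨w₀, hw₀⟩ : N.Nonempty := card_pos.mp (by omega)
  have pair : ∀ a ∈ V, ∀ b ∈ V, a ≠ b → d a = d v → d b = d v → f a ∈
      (insert v (insert v' N)).image f → f b ∈ (insert v (insert v' N)).image f →
      ¬ ∀ y ∈ (insert v (insert v' N)).image f, ∀ z ∈ (insert v (insert v' N)).image f,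
        y ≠ f a → z ≠ f a → splitLevel y z < splitLevel (f a) y := by
    intro a ha b hb hab hda hdb _ hbS hall
    have hw₀d := hN0 w₀ hw₀
    have h1 := hall (f b) hbS (f w₀) (mem_image_of_mem f (by simp [hw₀]))
      (fun hh => hab (hf hb ha hh).symm)
      (fun hh => by have := hf (hN hw₀) ha hh; subst this; omega)
    rw [h.apart b hb w₀ (hN hw₀) (by omega)] at h1
    have h2 := h.near a ha b hb b hb (by omega) (by omega) (by omega)
    omega
  rintro ⟨x, hx, hall⟩
  obtain ⟨a, ha, rfl⟩ := mem_image.mp hx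
  have hvS : f v ∈ (insert v (insert v' N)).image f := mem_image_of_mem f (by simp)
  have hv'S : f v' ∈ (insert v (insert v' N)).image f := mem_image_of_mem f (by simp)
  simp only [mem_insert] at ha
  rcases ha with rfl | rfl | ha
  · exact pair a hv v' hv' hne.symm rfl hd hvS hv'S hall
  · exact pair a hv' v hv hne hd rfl hv'S hvS hall
  · obtain ⟨b, hb, hba⟩ := exists_mem_ne hN2 a
    have hda := hN0 a ha
    have hdb := hN0 b hb
    have h1 := hall (f b) (mem_image_of_mem f (by simp [hb])) (f v) hvS
      (fun hh => hba (hf (hN hb) (hN ha) hh))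
      (fun hh => by have := hf hv (hN ha) hh; subst this; omega)
    rw [h.apart_symm (hN hb) hv (by omega)] at h1
    have h2 := h.near a (hN ha) b (hN hb) v hv (by omega) (by omega) hpos
    omega

end IsSpine

open Classical in
/-- The colouring of triples induced by a two-colouring of pairs. -/
noncomputable def tripleColoring (χ : Finset ℕ → Bool) (S : Finset ℕ) : Bool × Bool :=
  (χ (branchPositions S), decide (Descends S))

open Classical in
/-- The colouring of `(k + 1)`-sets induced by a colouring of `k`-sets, for `k ≥ 3`. -/
noncomputable def stepColoring (φ : Finset ℕ → Bool × Bool) (S : Finset ℕ) : Bool × Bool :=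
  if Descends S ∨ Ascends S then φ (branchPositions S) else (decide (IsolatedTop S), false)

theorem Avoids.triple [DecidableEq U] {Γ : SimpleGraph U} [DecidableRel Γ.Adj] {s m B : ℕ}
    (hΓ : IsJoining Γ s) (hs : 1 ≤ s) {χ : Finset ℕ → Bool} (hχ : Avoids Γ 2 m B χ) :
    Avoids Γ 3 (8 * (m + 6 * s)) (2 ^ B) (tripleColoring χ) := by
  refine Avoids.step hΓ hs le_rfl hχ (fun S T _ h => (Prod.ext_iff.mp h).1) ?_
  intro V f d left c h hf hcon u _ v hv v' hv' hpos _ hne hd _ hdeg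
  obtain ⟨w, hw, w', hw', hww⟩ := one_lt_card.mp (show 1 <
    ((V.filter fun w => d w = 0).filter (Γ.Adj v)).card by omega)
  simp only [mem_filter] at hw hw'
  obtain ⟨⟨hwV, hdw⟩, hvw⟩ := hw
  obtain ⟨⟨hwV', hdw'⟩, hvw'⟩ := hw'
  have hv'w : v' ≠ w := by rintro rfl; omega
  have hcol := (hcon {v, v', w} (by simp [insert_subset_iff, hv, hv', hwV])
      (card_eq_three.mpr ⟨v, v', w, hne.symm, hvw.ne, hv'w, rfl⟩)
      ⟨v, by simp, v', by simp, hne, fun x hx h1 h2 => by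
        simp only [mem_insert, mem_singleton, h1, h2, false_or] at hx
        exact hx ▸ hvw⟩).trans
    (hcon {v, w, w'} (by simp [insert_subset_iff, hv, hwV, hwV'])
      (card_eq_three.mpr ⟨v, w, w', hvw.ne, hvw'.ne, hww, rfl⟩)
      ⟨v, by simp, w, by simp, hvw.ne', fun x hx h1 h2 => by
        simp only [mem_insert, mem_singleton, h1, h2, false_or] at hx
        exact hx ▸ hvw'⟩).symm
  have hiff := (Prod.ext_iff.mp hcol).2
  simp only [tripleColoring, decide_eq_decide, image_insert, image_singleton] at hiff
  have hfv : f v ≠ f v' := fun hh => hne (hf hv hv' hh).symm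
  have hfw : f w ≠ f w' := fun hh => hww (hf hwV hwV' hh)
  by_cases hl : left (d v)
  · refine h.not_descends_of_left hwV hv hv' (by simp) (by simp) (by simp) hfv hd.symm
      (by omega) hl (hiff.mpr ?_)
    exact descends_triple (h.near w hwV w' hwV' v hv (by omega) (by omega) hpos)
      (h.apart v hv w hwV (by omega)) (h.apart v hv w' hwV' (by omega))
      (h.lt_of_left v hv w hwV (by omega) hl) (h.lt_of_left v hv w' hwV' (by omega) hl)
  · refine h.not_descends_of_not_left hv hwV hwV' (by simp) (by simp) (by simp) hfw
      (by omega) (by omega) hl (hiff.mp ?_)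
    have : ({f v, f v', f w} : Finset ℕ) = {f w, f v, f v'} := by
      ext x
      simp only [mem_insert, mem_singleton]
      tauto
    rw [this]
    exact descends_triple (h.near v hv v' hv' v hv hd.symm le_rfl hpos)
      (h.apart_symm hwV hv (by omega)) ((h.apart_symm hwV hv' (by omega)).trans hd)
      (h.lt_of_not_left v hv w hwV (by omega) hl)
      (h.lt_of_not_left v' hv' w hwV (by omega) (hd ▸ hl))

theorem Avoids.stepColoring [DecidableEq U] {Γ : SimpleGraph U} [DecidableRel Γ.Adj]
    {s k m B : ℕ} (hΓ : IsJoining Γ s) (hs : 1 ≤ s) (hk : 3 ≤ k)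
    {φ : Finset ℕ → Bool × Bool} (hφ : Avoids Γ k m B φ) :
    Avoids Γ (k + 1) (8 * (m + (k + 4) * s)) (2 ^ B) (stepColoring φ) := by
  refine Avoids.step hΓ hs (by omega) hφ (fun S T hST h => ?_) ?_
  · have hS : Descends S ∨ Ascends S := hST.imp And.left And.left
    have hT : Descends T ∨ Ascends T := hST.imp And.right And.right
    simpa only [_root_.stepColoring, if_pos hS, if_pos hT] using h
  intro V f d left c h hf hcon u hu v hv v' hv' hpos huv hne hd hadj hdeg
  have hnbr : ∀ j ≤ k, ∃ N ⊆ V, N.card = j ∧ ∀ x ∈ N, d x = 0 ∧ Γ.Adj v x := by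
    intro j hj
    obtain ⟨N, hN, hNj⟩ := exists_subset_card_eq (show j ≤
      ((V.filter fun w => d w = 0).filter (Γ.Adj v)).card by omega)
    refine ⟨N, fun x hx => ?_, hNj, fun x hx => ?_⟩
    · exact (mem_filter.mp (mem_filter.mp (hN hx)).1).1
    · exact ⟨(mem_filter.mp (mem_filter.mp (hN hx)).1).2, (mem_filter.mp (hN hx)).2⟩
  have hvu : v ≠ u := fun hh => by subst hh; omega
  have hv'u : v' ≠ u := fun hh => by subst hh; omega
  have hfv : f v ≠ f v' := fun hh => hne (hf hv hv' hh).symm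
  have hfvw : ∀ w ∈ V, d w = 0 → f v ≠ f w := fun w hw hdw hh => by
    have := hf hv hw hh
    subst this
    omega
  have hbalanced : c = (false, false) := by
    obtain ⟨N, hNV, hNc, hN⟩ := hnbr (k - 1) (by omega)
    obtain ⟨w, hw, w', hw', hww⟩ := one_lt_card.mp (show 1 < N.card by omega)
    have hfw : f w ≠ f w' := fun hh => hww (hf (hNV hw) (hNV hw') hh)
    have hvN : v ∉ N := fun hh => by have := (hN v hh).1; omega
    have hv'N : v' ∉ N := fun hh => by have := (hN v' hh).1; omega
    have hdw := (hN w hw).1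
    have hdw' := (hN w' hw').1
    have hmem : ∀ x ∈ insert v (insert v' N), f x ∈ (insert v (insert v' N)).image f :=
      fun x hx => mem_image_of_mem f hx
    have hv_mem := hmem v (by simp)
    have hv'_mem := hmem v' (by simp)
    have hw_mem := hmem w (by simp [hw])
    have hw'_mem := hmem w' (by simp [hw'])
    have hnot : ¬ (Descends ((insert v (insert v' N)).image f) ∨
        Ascends ((insert v (insert v' N)).image f)) := by
      rw [not_or]
      by_cases hl : left (d v)
      · exact ⟨h.not_descends_of_left (hNV hw) hv hv' hw_mem hv_mem hv'_mem hfv hd.symm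
            (by omega) hl,
          h.not_ascends_of_left hv (hNV hw) (hNV hw') hv_mem hw_mem hw'_mem hfw
            (by omega) (by omega) hl⟩
      · exact ⟨h.not_descends_of_not_left hv (hNV hw) (hNV hw') hv_mem hw_mem hw'_mem hfw
            (by omega) (by omega) hl,
          h.not_ascends_of_not_left (hNV hw) hv hv' hw_mem hv_mem hv'_mem hfv hd.symm
            (by omega) hl⟩
    have htop := h.not_isolatedTop_image hf hv hv' hNV hne hd hpos (fun x hx => (hN x hx).1)
      (by omega)
    have hc := hcon (insert v (insert v' N))
      (insert_subset hv (insert_subset hv' hNV))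
      (by rw [card_insert_of_notMem (by simp [hne.symm, hvN]), card_insert_of_notMem hv'N, hNc]
          omega)
      ⟨v, by simp, v', by simp, hne, fun x hx h1 h2 => by
        simp only [mem_insert, h1, h2, false_or] at hx
        exact (hN x hx).2⟩
    rw [← hc, _root_.stepColoring, if_neg hnot]
    simp only [htop, decide_false]
  have hisolated : ∀ e ⊆ V, e.card = k + 1 → IsStarEdge Γ e → u ∈ e →
      (∀ x ∈ e, x ≠ u → d x < d u) →
      ¬ (Descends (e.image f) ∨ Ascends (e.image f)) → False := by
    intro e he hek hst hue hlt hnot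
    have hc := hcon e he hek hst
    rw [hbalanced] at hc
    rw [_root_.stepColoring, if_neg hnot] at hc
    simp [h.isolatedTop_image he hue hlt] at hc
  by_cases hdir : left (d u) ↔ left (d v)
  · obtain ⟨N, hNV, hNc, hN⟩ := hnbr (k - 2) (by omega)
    obtain ⟨w, hw⟩ : N.Nonempty := card_pos.mp (by omega)
    have hdw := (hN w hw).1
    have hvN : v ∉ N := fun hh => by have := (hN v hh).1; omega
    have hv'N : v' ∉ N := fun hh => by have := (hN v' hh).1; omega
    have huN : u ∉ N := fun hh => by have := (hN u hh).1; omega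
    have hmem : ∀ x ∈ insert u (insert v (insert v' N)),
        f x ∈ (insert u (insert v (insert v' N))).image f := fun x hx => mem_image_of_mem f hx
    have hu_mem := hmem u (by simp)
    have hv_mem := hmem v (by simp)
    have hv'_mem := hmem v' (by simp)
    have hw_mem := hmem w (by simp [hw])
    refine hisolated (insert u (insert v (insert v' N)))
      (insert_subset hu (insert_subset hv (insert_subset hv' hNV))) ?_
      ⟨v, by simp, v', by simp, hne, fun x hx h1 h2 => ?_⟩ (by simp) (fun x hx hxu => ?_) ?_
    · rw [card_insert_of_notMem (by simp [hvu.symm, hv'u.symm, huN]),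
        card_insert_of_notMem (by simp [hne.symm, hvN]), card_insert_of_notMem hv'N, hNc]
      omega
    · simp only [mem_insert, h1, h2, false_or] at hx
      rcases hx with rfl | hx
      · exact hadj.symm
      · exact (hN x hx).2
    · simp only [mem_insert, hxu, false_or] at hx
      rcases hx with rfl | rfl | hx
      · exact huv
      · omega
      · have := (hN x hx).1
        omega
    · rw [not_or]
      by_cases hl : left (d v)
      · exact ⟨h.not_descends_of_left (hNV hw) hv hv' hw_mem hv_mem hv'_mem hfv hd.symm
            (by omega) hl,
          h.not_ascends_of_left hu hv (hNV hw) hu_mem hv_mem hw_mem (hfvw w (hNV hw) hdw)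
            huv (by omega) (hdir.mpr hl)⟩
      · exact ⟨h.not_descends_of_not_left hu hv (hNV hw) hu_mem hv_mem hw_mem
            (hfvw w (hNV hw) hdw) huv (by omega) (fun hh => hl (hdir.mp hh)),
          h.not_ascends_of_not_left (hNV hw) hv hv' hw_mem hv_mem hv'_mem hfv hd.symm
            (by omega) hl⟩
  · obtain ⟨N, hNV, hNc, hN⟩ := hnbr (k - 1) (by omega)
    obtain ⟨w, hw, w', hw', hww⟩ := one_lt_card.mp (show 1 < N.card by omega)
    have hfw : f w ≠ f w' := fun hh => hww (hf (hNV hw) (hNV hw') hh)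
    have hdw := (hN w hw).1
    have hdw' := (hN w' hw').1
    have hvN : v ∉ N := fun hh => by have := (hN v hh).1; omega
    have huN : u ∉ N := fun hh => by have := (hN u hh).1; omega
    have hmem : ∀ x ∈ insert u (insert v N), f x ∈ (insert u (insert v N)).image f :=
      fun x hx => mem_image_of_mem f hx
    have hu_mem := hmem u (by simp)
    have hv_mem := hmem v (by simp)
    have hw_mem := hmem w (by simp [hw])
    have hw'_mem := hmem w' (by simp [hw'])
    refine hisolated (insert u (insert v N)) (insert_subset hu (insert_subset hv hNV)) ?_
      ⟨v, by simp, u, by simp, hvu.symm, fun x hx h1 h2 => ?_⟩ (by simp) (fun x hx hxu => ?_) ?_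
    · rw [card_insert_of_notMem (by simp [hvu.symm, huN]), card_insert_of_notMem hvN, hNc]
      omega
    · simp only [mem_insert, h1, h2, false_or] at hx
      exact (hN x hx).2
    · simp only [mem_insert, hxu, false_or] at hx
      rcases hx with rfl | hx
      · exact huv
      · have := (hN x hx).1
        omega
    · rw [not_or]
      by_cases hl : left (d v)
      · have hlu : ¬ left (d u) := fun hh => hdir ⟨fun _ => hl, fun _ => hh⟩
        exact ⟨h.not_descends_of_not_left hu hv (hNV hw) hu_mem hv_mem hw_mem
            (hfvw w (hNV hw) hdw) huv (by omega) hlu,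
          h.not_ascends_of_left hv (hNV hw) (hNV hw') hv_mem hw_mem hw'_mem hfw
            (by omega) (by omega) hl⟩
      · have hlu : left (d u) := by
          by_contra hlu
          exact hdir ⟨fun hh => absurd hh hlu, fun hh => absurd hh hl⟩
        exact ⟨h.not_descends_of_not_left hv (hNV hw) (hNV hw') hv_mem hw_mem hw'_mem hfw
            (by omega) (by omega) hl,
          h.not_ascends_of_left hu hv (hNV hw) hu_mem hv_mem hw_mem
            (hfvw w (hNV hw) hdw) huv (by omega) hlu⟩

/-- Iterated base-two exponentials of a natural number. -/
def natTower : ℕ → ℕ → ℕ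
  | 0, M => M
  | k + 1, M => 2 ^ natTower k M

theorem exists_avoiding_coloring (k : ℕ) : ∃ C : ℕ, ∀ {U : Type} [DecidableEq U]
    {Γ : SimpleGraph U} {s M : ℕ} {χ : Finset ℕ → Bool}, IsJoining Γ s → 1 ≤ s →
    Avoids Γ 2 s M χ →
    ∃ ψ : Finset ℕ → Bool × Bool, Avoids Γ (k + 3) (C * s) (natTower (k + 1) M) ψ := by
  induction k with
  | zero =>
    refine ⟨56, fun {U} _ {Γ s M χ} hΓ hs hχ => ?_⟩
    classical
    refine ⟨tripleColoring χ, ?_⟩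
    rw [show 56 * s = 8 * (s + 6 * s) by ring]
    exact hχ.triple hΓ hs
  | succ k ih =>
    obtain ⟨C, hC⟩ := ih
    refine ⟨8 * (C + (k + 7)), fun {U} _ {Γ s M χ} hΓ hs hχ => ?_⟩
    classical
    obtain ⟨ψ, hψ⟩ := hC hΓ hs hχ
    refine ⟨stepColoring ψ, ?_⟩
    rw [show 8 * (C + (k + 7)) * s = 8 * (C * s + (k + 3 + 4) * s) by ring]
    exact hψ.stepColoring hΓ hs (by omega)

/-! ### The union bound and the random colouring of pairs -/

theorem exists_notMem_of_card_mul_lt {α ι : Type*} [Fintype α] [DecidableEq α] (I : Finset ι)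
    (bad : ι → Finset α) {b : ℕ} (hbad : ∀ i ∈ I, (bad i).card ≤ b)
    (hlt : I.card * b < Fintype.card α) : ∃ a, ∀ i ∈ I, a ∉ bad i := by
  by_contra! hcon
  have hcov : (univ : Finset α) ⊆ I.biUnion bad := fun a _ => by
    obtain ⟨i, hi, hai⟩ := hcon a
    exact mem_biUnion.mpr ⟨i, hi, hai⟩
  have h1 := card_le_card hcov
  have h2 := card_biUnion_le_card_mul I bad b hbad
  rw [card_univ] at h1
  omega

theorem exists_coloring_pairs {s M : ℕ} (h : 2 * M ^ s < 2 ^ s.choose 2) :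
    ∃ χ : Finset (Fin M) → Bool, ∀ T : Finset (Fin M), T.card = s → ∀ c,
      ∃ e ⊆ T, e.card = 2 ∧ χ e ≠ c := by
  obtain ⟨χ, hχ⟩ := exists_notMem_of_card_mul_lt
    ((powersetCard s (univ : Finset (Fin M))) ×ˢ (univ : Finset Bool))
    (fun i => Fintype.piFinset fun e : Finset (Fin M) =>
      if e ∈ powersetCard 2 i.1 then {i.2} else univ)
    (b := 2 ^ (2 ^ M - s.choose 2)) (by
      rintro ⟨T, c⟩ hT
      simp only [mem_product, mem_powersetCard, subset_univ, true_and, mem_univ, and_true] at hT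
      rw [Fintype.card_piFinset]
      simp only [apply_ite card, card_singleton, card_univ, Fintype.card_bool]
      rw [prod_ite, prod_const_one, one_mul, prod_const]
      refine Nat.pow_le_pow_right (by norm_num) ?_
      rw [filter_not, filter_mem_eq_inter, univ_inter, card_sdiff_of_subset (subset_univ _),
        card_powersetCard, hT]
      simp) (by
      by_cases hM : M < s
      · have : (powersetCard s (univ : Finset (Fin M))).card = 0 := by
          rw [card_powersetCard]; simp [Nat.choose_eq_zero_of_lt hM]
        rw [card_product, this, zero_mul, zero_mul]
        exact Fintype.card_pos
      · have hle : s.choose 2 ≤ 2 ^ M :=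
          (Nat.choose_le_choose 2 (not_lt.mp hM)).trans (Nat.choose_le_two_pow M 2)
        have hch : M.choose s ≤ M ^ s := Nat.choose_le_pow M s
        rw [card_product, card_powersetCard]
        simp only [card_univ, Fintype.card_fin, Fintype.card_bool, Fintype.card_fun,
          Fintype.card_finset]
        have hpos : 0 < 2 ^ (2 ^ M - s.choose 2) := by positivity
        calc M.choose s * 2 * 2 ^ (2 ^ M - s.choose 2)
            ≤ 2 * M ^ s * 2 ^ (2 ^ M - s.choose 2) := 
              Nat.mul_le_mul_right _ (by omega)
          _ < 2 ^ s.choose 2 * 2 ^ (2 ^ M - s.choose 2) := by gcongr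
          _ = 2 ^ 2 ^ M := by rw [← pow_add, Nat.add_sub_cancel' hle])
  refine ⟨χ, fun T hT c => ?_⟩
  by_contra! hcon
  refine hχ (T, c) (by simp [hT]) ?_
  rw [Fintype.mem_piFinset]
  intro e
  split_ifs with he
  · rw [mem_powersetCard] at he
    simpa using hcon e he.1 he.2
  · simp

theorem exists_avoids_pairs {s : ℕ} (hs : 4 ≤ s) : ∃ χ : Finset ℕ → Bool,
    ∀ {U : Type} [DecidableEq U] (Γ : SimpleGraph U), Avoids Γ 2 s (2 ^ (s / 4)) χ := by
  obtain ⟨χ, hχ⟩ := exists_coloring_pairs (s := s) (M := 2 ^ (s / 4)) (by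
    rw [← pow_mul, ← pow_succ', Nat.choose_two_right]
    refine Nat.pow_lt_pow_right (by norm_num) ?_
    rw [Nat.lt_div_iff_mul_lt (by norm_num)]
    obtain ⟨t, rfl⟩ : ∃ t, s = t + 4 := ⟨s - 4, by omega⟩
    have h1 : (t + 4) / 4 * 4 ≤ t + 4 := Nat.div_mul_le_self _ _
    have h2 : ((t + 4) / 4 * (t + 4) + 1) * 2 + 2 ≤ (t + 4) * (t + 3) := by nlinarith
    rw [show t + 4 - 1 = t + 3 by omega]
    omega)
  refine ⟨fun S => χ (univ.filter fun x => (x : ℕ) ∈ S), fun {U} _ Γ V hV f hf hB c => ?_⟩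
  obtain ⟨W, hWV, hW⟩ := exists_subset_card_eq hV
  have hfW : Set.InjOn f W := hf.mono (by exact_mod_cast hWV)
  obtain ⟨e, he, he2, hec⟩ := hχ ((W.image f).attachFin (by
    simp only [forall_mem_image]
    exact fun x hx => hB x (hWV hx))) (by rw [card_attachFin, card_image_of_injOn hfW, hW]) c
  obtain ⟨x, y, hxy, rfl⟩ := card_eq_two.mp he2
  have hx := he (mem_insert_self x _)
  have hy := he (mem_insert_of_mem (mem_singleton_self y))
  rw [mem_attachFin, mem_image] at hx hy
  obtain ⟨a, ha, hax⟩ := hx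
  obtain ⟨b, hb, hby⟩ := hy
  have hab : a ≠ b := by
    rintro rfl
    exact hxy (Fin.ext (hax.symm.trans hby))
  refine ⟨{a, b}, insert_subset (hWV ha) (singleton_subset_iff.mpr (hWV hb)), card_pair hab,
    ⟨a, by simp, b, by simp, hab.symm, fun u hu h1 h2 => ?_⟩, ?_⟩
  · simp [h1, h2] at hu
  · convert hec using 2
    ext z
    simp [hax, hby, Fin.ext_iff]

/-! ### Sparse joining graphs -/

/-- A multiset of `m` ordered pairs meeting every product of two sets of size `s`. -/
theorem exists_pairs_meeting {n s m : ℕ}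
    (h : 4 ^ n * (n ^ 2 - s ^ 2) ^ m < (n ^ 2) ^ m) :
    ∃ g : Fin m → Fin n × Fin n, ∀ A B : Finset (Fin n), A.card = s → B.card = s →
      ∃ i, (g i).1 ∈ A ∧ (g i).2 ∈ B := by
  obtain ⟨g, hg⟩ := exists_notMem_of_card_mul_lt
    ((powersetCard s (univ : Finset (Fin n))) ×ˢ (powersetCard s (univ : Finset (Fin n))))
    (fun i => Fintype.piFinset fun _ : Fin m => univ \ i.1 ×ˢ i.2)
    (b := (n ^ 2 - s ^ 2) ^ m) (by
      rintro ⟨A, B⟩ hAB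
      simp only [mem_product, mem_powersetCard, subset_univ, true_and] at hAB
      rw [Fintype.card_piFinset]
      simp [card_sdiff_of_subset, hAB, sq]) (by
      refine lt_of_le_of_lt (Nat.mul_le_mul_right _ ?_) (h.trans_eq (by simp [sq]))
      rw [card_product, card_powersetCard, card_univ, Fintype.card_fin,
        show 4 = 2 * 2 by rfl, mul_pow]
      exact Nat.mul_le_mul (Nat.choose_le_two_pow n s) (Nat.choose_le_two_pow n s))
  refine ⟨g, fun A B hA hB => ?_⟩
  by_contra! hcon
  refine hg (A, B) (by simp [hA, hB]) ?_
  rw [Fintype.mem_piFinset]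
  intro i
  simpa using hcon i

theorem pow_add_mul_pow_le (r m : ℕ) : r ^ (m + 1) + (m + 1) * r ^ m ≤ (r + 1) ^ (m + 1) := by
  induction m with
  | zero => simp
  | succ m ih =>
    calc r ^ (m + 1 + 1) + (m + 1 + 1) * r ^ (m + 1)
        ≤ (r ^ (m + 1) + (m + 1) * r ^ m) * (r + 1) := by
          ring_nf
          omega
      _ ≤ (r + 1) ^ (m + 1) * (r + 1) := by gcongr
      _ = (r + 1) ^ (m + 1 + 1) := by ring

theorem two_mul_pred_pow_le {Q : ℕ} (hQ : 1 ≤ Q) : 2 * (Q - 1) ^ Q ≤ Q ^ Q := by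
  obtain ⟨r, rfl⟩ : ∃ r, Q = r + 1 := ⟨Q - 1, by omega⟩
  have h := pow_add_mul_pow_le r r
  rw [Nat.add_sub_cancel]
  rw [add_mul, ← pow_succ', one_mul] at h
  omega

theorem four_pow_mul_lt {n s Q : ℕ} (hn : 1 ≤ n) (hQ : 1 ≤ Q) (hs : n ^ 2 ≤ Q * s ^ 2) :
    4 ^ n * (n ^ 2 - s ^ 2) ^ (3 * Q * n) < (n ^ 2) ^ (3 * Q * n) := by
  have h1 : Q * (n ^ 2 - s ^ 2) ≤ (Q - 1) * n ^ 2 := by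
    rw [Nat.mul_sub, Nat.sub_mul]
    omega
  have h2 : 8 ^ n * (Q * (n ^ 2 - s ^ 2)) ^ (3 * Q * n) ≤ (Q * n ^ 2) ^ (3 * Q * n) := by
    calc 8 ^ n * (Q * (n ^ 2 - s ^ 2)) ^ (3 * Q * n)
        ≤ 8 ^ n * ((Q - 1) * n ^ 2) ^ (3 * Q * n) := by gcongr
      _ = (2 * (Q - 1) ^ Q) ^ (3 * n) * (n ^ 2) ^ (3 * Q * n) := by
          rw [mul_pow, mul_pow, ← pow_mul, show 8 = 2 ^ 3 by rfl, ← pow_mul]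
          ring_nf
      _ ≤ (Q ^ Q) ^ (3 * n) * (n ^ 2) ^ (3 * Q * n) := by
          gcongr
          exact two_mul_pred_pow_le hQ
      _ = (Q * n ^ 2) ^ (3 * Q * n) := by
          rw [mul_pow, ← pow_mul]
          ring_nf
  rw [mul_pow, mul_pow, mul_left_comm] at h2
  have h3 := Nat.le_of_mul_le_mul_left h2 (by positivity)
  rcases Nat.eq_zero_or_pos ((n ^ 2 - s ^ 2) ^ (3 * Q * n)) with h0 | h0
  · rw [h0, mul_zero]
    positivity
  · refine lt_of_lt_of_le ?_ h3
    gcongr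
    omega

theorem exists_isJoining {n s Q T : ℕ} (hn : 1 ≤ n) (hQ : 1 ≤ Q) (hs : n ^ 2 ≤ Q * s ^ 2)
    (hT : 6 * Q * n ≤ T * s) :
    ∃ Γ : SimpleGraph (Fin n), IsJoining Γ (2 * s) ∧
      ∀ v, ∃ N : Finset (Fin n), N.card ≤ T ∧ ∀ u, Γ.Adj v u → u ∈ N := by
  obtain ⟨g, hg⟩ := exists_pairs_meeting (four_pow_mul_lt hn hQ hs)
  let inc : Fin n → Finset (Fin (3 * Q * n)) := fun v =>
    univ.filter fun i => (g i).1 = v ∨ (g i).2 = v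
  let nbr : Fin n → Finset (Fin n) := fun v =>
    (inc v).image fun i => if (g i).1 = v then (g i).2 else (g i).1
  have hnbr : ∀ v, (nbr v).card ≤ (inc v).card := fun v => card_image_le
  have hsum : ∑ v, (inc v).card ≤ 6 * Q * n := by
    have : ∑ v, (inc v).card = ∑ i, (univ.filter fun v => (g i).1 = v ∨ (g i).2 = v).card :=
      sum_card_bipartiteAbove_eq_sum_card_bipartiteBelow fun v i => (g i).1 = v ∨ (g i).2 = v
    rw [this]
    refine (sum_le_card_nsmul univ _ 2 fun i _ => ?_).trans (by simp; linarith)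
    refine (card_le_card (t := {(g i).1, (g i).2}) fun v hv => ?_).trans card_le_two
    simp only [mem_filter, mem_univ, true_and] at hv
    simp only [mem_insert, mem_singleton]
    tauto
  have hhigh : (univ.filter fun v => T < (inc v).card).card ≤ s := by
    by_contra hlt
    rw [not_le] at hlt
    have h1 : (univ.filter fun v => T < (inc v).card).card * (T + 1) ≤ ∑ v, (inc v).card := by
      rw [← smul_eq_mul]
      refine (card_nsmul_le_sum _ _ _ fun v hv => ?_).trans
        (sum_le_sum_of_subset (filter_subset _ _))
      exact (mem_filter.mp hv).2
    nlinarith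
  refine ⟨SimpleGraph.fromRel fun a b =>
    (inc a).card ≤ T ∧ (inc b).card ≤ T ∧ ∃ i, g i = (a, b), ?_, fun v => ?_⟩
  · intro A B hA hB hAB
    have hlow : ∀ A : Finset (Fin n), 2 * s ≤ A.card →
        ∃ A' ⊆ A, A'.card = s ∧ ∀ v ∈ A', (inc v).card ≤ T := by
      intro A hA
      have := le_card_sdiff (univ.filter fun v => T < (inc v).card) A
      obtain ⟨A', hA', hc⟩ := exists_subset_card_eq (show s ≤
        (A \ univ.filter fun v => T < (inc v).card).card by omega)
      refine ⟨A', hA'.trans sdiff_subset, hc, fun v hv => ?_⟩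
      have := hA' hv
      simp only [mem_sdiff, mem_filter, mem_univ, true_and, not_lt] at this
      exact this.2
    obtain ⟨A', hA', hAc, hAT⟩ := hlow A hA
    obtain ⟨B', hB', hBc, hBT⟩ := hlow B hB
    obtain ⟨i, hiA, hiB⟩ := hg A' B' hAc hBc
    refine ⟨_, hA' hiA, _, hB' hiB, ?_⟩
    rw [SimpleGraph.fromRel_adj]
    exact ⟨disjoint_left.mp hAB (hA' hiA) |> fun h hh => h (hh ▸ hB' hiB),
      Or.inl ⟨hAT _ hiA, hBT _ hiB, i, rfl⟩⟩
  · by_cases hv : (inc v).card ≤ T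
    · refine ⟨nbr v, (hnbr v).trans hv, fun u hu => ?_⟩
      rw [SimpleGraph.fromRel_adj] at hu
      obtain ⟨hne, ⟨_, _, i, hi⟩ | ⟨_, _, i, hi⟩⟩ := hu
      · exact mem_image.mpr ⟨i, by simp [inc, hi], by simp [hi]⟩
      · exact mem_image.mpr ⟨i, by simp [inc, hi], by simp [hi, hne.symm]⟩
    · refine ⟨∅, by simp, fun u hu => ?_⟩
      rw [SimpleGraph.fromRel_adj] at hu
      tauto

/-! ### Degrees in the star hypergraph -/

theorem card_starEdges_le {n T : ℕ} {Γ : SimpleGraph (Fin n)} {N : Fin n → Finset (Fin n)}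
    (hNc : ∀ v, (N v).card ≤ T) (hN : ∀ v u, Γ.Adj v u → u ∈ N v) (x : Fin n)
    {E : Finset (Finset (Fin n))} (hE : ∀ e ∈ E, IsStarEdge Γ e) :
    (E.filter fun e => x ∈ e).card ≤ (T + 2) * 2 ^ T * n := by
  let star : Fin n → Fin n → Finset (Finset (Fin n)) := fun v z =>
    (N v).powerset.image fun S => insert v (insert z S)
  have hstar : ∀ v z, (star v z).card ≤ 2 ^ T := fun v z =>
    card_image_le.trans (by
      rw [card_powerset]
      exact Nat.pow_le_pow_right (by norm_num) (hNc v))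
  have hcov : (E.filter fun e => x ∈ e) ⊆
      ((insert x (N x)) ×ˢ univ ∪ univ ×ˢ {x}).biUnion fun p => star p.1 p.2 := by
    intro e he
    obtain ⟨heE, hxe⟩ := mem_filter.mp he
    obtain ⟨v, hv, z, hz, hzv, hadj⟩ := hE e heE
    refine mem_biUnion.mpr ⟨(v, z), ?_, mem_image.mpr ⟨(e.erase v).erase z, ?_, ?_⟩⟩
    · simp only [mem_union, mem_product, mem_insert, mem_univ, and_true, true_and, mem_singleton]
      by_cases hxv : x = v
      · exact Or.inl (Or.inl hxv.symm)
      by_cases hxz : x = z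
      · exact Or.inr hxz.symm
      · exact Or.inl (Or.inr (hN x v (hadj x hxe hxv hxz).symm))
    · rw [mem_powerset]
      intro u hu
      simp only [mem_erase] at hu
      exact hN v u (hadj u hu.2.2 hu.2.1 hu.1)
    · rw [insert_erase (mem_erase.mpr ⟨hzv, hz⟩), insert_erase hv]
  refine (card_le_card hcov).trans
    ((card_biUnion_le_card_mul _ _ (2 ^ T) fun p _ => hstar p.1 p.2).trans ?_)
  have hcard : ((insert x (N x)) ×ˢ (univ : Finset (Fin n)) ∪ univ ×ˢ {x}).card ≤ (T + 2) * n := by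
    refine (card_union_le _ _).trans ?_
    rw [card_product, card_product, card_univ, Fintype.card_fin, card_singleton]
    have := (card_insert_le x (N x)).trans (Nat.succ_le_succ (hNc x))
    nlinarith
  calc _ ≤ (T + 2) * n * 2 ^ T := Nat.mul_le_mul_right _ hcard
    _ = _ := by ring

/-! ### The lower bound -/

theorem natTower_two_pow (k M : ℕ) : natTower k (2 ^ M) = natTower (k + 1) M := by
  induction k with
  | zero => rfl
  | succ k ih => rw [natTower, ih, ← natTower]

theorem tw_le_natTower (k : ℕ) {x : ℝ} {t : ℕ} (hx : x ≤ t) :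
    tw (k + 1) x ≤ natTower k t := by
  induction k with
  | zero => exact hx
  | succ k ih =>
    rw [tw, natTower, Nat.cast_pow, Nat.cast_ofNat, ← Real.rpow_natCast]
    exact Real.rpow_le_rpow_of_exponent_le (by norm_num) ih

/-- For every `k ≥ 3` there are constants `c, c' > 0` such that for every sufficiently
large `n` there is a `k`-uniform hypergraph on `n` vertices with maximum degree at most
`c * n` whose `4`-color Ramsey number is at least `tw k (c' * n)`. -/
theorem bounded_degree_lower_bound (k : ℕ) (hk : 3 ≤ k) :
    ∃ c c' : ℝ, 0 < c ∧ 0 < c' ∧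
      ∃ n₀ : ℕ, ∀ n : ℕ, n₀ ≤ n →
        ∃ E : Finset (Finset (Fin n)),
          (∀ e ∈ E, e.card = k) ∧
          (∀ v : Fin n, ((E.filter (fun e => v ∈ e)).card : ℝ) ≤ c * n) ∧
          tw k (c' * n) ≤ (hypRamsey 4 E : ℝ) := by
  classical
  obtain ⟨k, rfl⟩ : ∃ j, k = j + 3 := ⟨k - 3, by omega⟩
  obtain ⟨C, hC⟩ := exists_avoiding_coloring k
  obtain ⟨K, hCK, hK⟩ : ∃ K, 2 * C ≤ K ∧ 1 ≤ K := ⟨2 * C + 1, by omega, by omega⟩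
  set T : ℕ := 12 * (4 * K ^ 2) * K with hT
  refine ⟨((T + 2) * 2 ^ T : ℕ), 1 / (6 * K), by positivity, by positivity, 2 * K,
    fun n hn => ?_⟩
  set s := n / K with hs
  have hs2 : 2 ≤ s := (Nat.le_div_iff_mul_le hK).mpr hn
  have hsn : K * s ≤ n := Nat.mul_div_le n K
  have hns : n ≤ 2 * K * s := by
    have := Nat.lt_mul_div_succ n hK
    rw [← hs] at this
    nlinarith
  obtain ⟨Γ, hΓ, hdeg⟩ := exists_isJoining (n := n) (s := s) (Q := 4 * K ^ 2) (T := T)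
    (by omega) (by nlinarith)
    (by calc n ^ 2 ≤ (2 * K * s) ^ 2 := Nat.pow_le_pow_left hns 2
          _ = 4 * K ^ 2 * s ^ 2 := by ring)
    (by calc 6 * (4 * K ^ 2) * n ≤ 6 * (4 * K ^ 2) * (2 * K * s) := by gcongr
          _ = T * s := by rw [hT]; ring)
  choose N hNc hN using hdeg
  obtain ⟨χ, hχ⟩ := exists_avoids_pairs (s := 2 * s) (by omega)
  obtain ⟨ψ, hψ⟩ := hC hΓ (by omega) (hχ Γ)
  refine ⟨univ.filter fun e => e.card = k + 3 ∧ IsStarEdge Γ e, fun e he => ?_, fun v => ?_, ?_⟩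
  · exact (mem_filter.mp he).2.1
  · have := card_starEdges_le hNc hN v
      (E := univ.filter fun e => e.card = k + 3 ∧ IsStarEdge Γ e)
      fun e he => (mem_filter.mp he).2.2
    exact_mod_cast this
  · have hB : natTower (k + 2) (2 * s / 4) ≤
        hypRamsey 4 (univ.filter fun e : Finset (Fin n) => e.card = k + 3 ∧ IsStarEdge Γ e) := by
      refine le_hypRamsey (fun e he => (mem_filter.mp he).2.1)
        (fun S => Fintype.equivFinOfCardEq (show Fintype.card (Bool × Bool) = 4 by rfl) (ψ S))
        fun f hf hlt c => ?_
      obtain ⟨e, -, hek, hst, hne⟩ := hψ univ (by rw [card_univ, Fintype.card_fin]; nlinarith) f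
        hf.injOn (fun v _ => by rw [natTower_two_pow]; exact hlt v)
        ((Fintype.equivFinOfCardEq (show Fintype.card (Bool × Bool) = 4 by rfl)).symm c)
      exact ⟨e, mem_filter.mpr ⟨mem_univ _, hek, hst⟩, fun h => hne ((Equiv.eq_symm_apply _).mpr h)⟩
    refine (tw_le_natTower (k + 2) ?_).trans (Nat.cast_le.mpr hB)
    have h6 : n ≤ 6 * K * (2 * s / 4) := by
      have : s ≤ 3 * (2 * s / 4) := by omega
      nlinarith
    rw [one_div_mul_eq_div, div_le_iff₀ (by positivity), mul_comm]
    exact_mod_cast h6
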